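/- arXiv:0902.1591 — 3 statements merged into one kernel-verified Lean document; each statement's English description precedes it below -/
import Mathlib

section
/- Fix a source pmf p(s1,s2) on finite alphabets, a channel conditional pmf p(y1,y2|x) on finite alphabets, and deterministic maps f, g with f(S1) = g(S2) =: K almost surely. Then the following two conditions are equivalent. (A) There exist finite-alphabet random variables (U0,U1,U2) and a conditional pmf p(u0,u1,u2,x|s1,s2) such that, under the joint law p(s1,s2)·p(u0,u1,u2,x|s1,s2)·p(y1,y2|x), all five inequalities hold: H(S1) < I(U0,U1,S1;Y1) − I(U0,U1;S2|S1); H(S2) < I(U0,U2,S2;Y2) − I(U0,U2;S1|S2); H(S1,S2) < I(K,U0,U1,S1;Y1) + I(U2,S2;Y2|K,U0) − I(U1,S1;U2,S2|K,U0); H(S1,S2) < I(U1,S1;Y1|K,U0) + I(K,U0,U2,S2;Y2) − I(U1,S1;U2,S2|K,U0); H(S1,S2) < I(U0,U1,S1;Y1) + I(U0,U2,S2;Y2) − I(U1,S1;U2,S2|K,U0) − I(S1,S2;K,U0). (B) There exist finite-alphabet random variables (U0,U1,U2) and a conditional pmf p(u0,u1,u2,x|s1,s2) such that, under the same induced joint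 law, all five inequalities hold: H(S1) < I(U0,U1,S1;Y1) − I(U0,U1;S2|S1); H(S2) < I(U0,U2,S2;Y2) − I(U0,U2;S1|S2); H(S1,S2) < I(U0,U1,S1;Y1) + I(U2,S2;Y2|U0) − I(U1,S1;U2,S2|U0); H(S1,S2) < I(U1,S1;Y1|U0) + I(U0,U2,S2;Y2) − I(U1,S1;U2,S2|U0); H(S1,S2) < I(U0,U1,S1;Y1) + I(U0,U2,S2;Y2) − I(U1,S1;U2,S2|U0) − I(S1,S2;U0). -/
/-!
Both implications use only that entropy is monotone: if, almost surely, `Z` determines `X`, then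
`H(X) ≤ H(Z)` (`H_le_of_determines`), with equality when each determines the other (`H_congr`).

From Han–Costa to Minero–Kim, take `V0 = (K, U0)`, `V1 = U1`, `V2 = U2`. Since `K` is almost surely
a function of `S1` and also of `S2`, adjoining or removing `K` next to either source changes no
entropy, and the five inequalities coincide term by term (`MKfive_of_HCfive`). The new joint law is
the pushforward of the old one under `(s1, s2, u0, …) ↦ (s1, s2, (f s1, u0), …)`, so all entropies
are computed on the old space (`H_pushforward`).

From Minero–Kim to Han–Costa, the same auxiliary variables work. The right-hand sides of the third
and fourth inequalities increase by `H(K | U0) - I(K; Yᵢ | U0) = H(K | Yᵢ, U0) ≥ 0`, and in the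
fifth the two changes by `H(K | U0)` cancel (`HCfive_of_MKfive`).
-/


open Real Filter

attribute [local instance] Classical.propDecidable

noncomputable section

namespace CSBC

/-- A probability mass function on a finite type. -/
def IsPMF {Ω : Type*} [Fintype Ω] (p : Ω → ℝ) : Prop :=
  (∀ ω, 0 ≤ p ω) ∧ ∑ ω, p ω = 1

/-- Distribution (pushforward pmf) of a random variable `X` under pmf `p`. -/
def dist {Ω A : Type*} [Fintype Ω] [Fintype A] (p : Ω → ℝ) (X : Ω → A) : A → ℝ :=
  fun a => ∑ ω, if X ω = a then p ω else 0

/-- Shannon entropy of the random variable `X` under the pmf `p`. -/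
def H {Ω A : Type*} [Fintype Ω] [Fintype A] (p : Ω → ℝ) (X : Ω → A) : ℝ :=
  -∑ a, dist p X a * Real.log (dist p X a)

/-- Mutual information `I(X;Y)` under the pmf `p`. -/
def I2 {Ω A B : Type*} [Fintype Ω] [Fintype A] [Fintype B]
    (p : Ω → ℝ) (X : Ω → A) (Y : Ω → B) : ℝ :=
  H p X + H p Y - H p (fun ω => (X ω, Y ω))

/-- Conditional mutual information `I(X;Y|Z)` under the pmf `p`. -/
def CI {Ω A B C : Type*} [Fintype Ω] [Fintype A] [Fintype B] [Fintype C]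
    (p : Ω → ℝ) (X : Ω → A) (Y : Ω → B) (Z : Ω → C) : ℝ :=
  H p (fun ω => (X ω, Z ω)) + H p (fun ω => (Y ω, Z ω))
    - H p (fun ω => (X ω, Y ω, Z ω)) - H p Z

end CSBC

open CSBC
namespace CSBC

/-- The five inequalities of Theorem 2 (Minero–Kim form) for sources `S1, S2`,
auxiliary triple `V0, V1, V2` and channel outputs `Y1, Y2`. -/
def MKfive {Ω A1 A2 B0 B1 B2 C1 C2 : Type*} [Fintype Ω] [Fintype A1] [Fintype A2]
    [Fintype B0] [Fintype B1] [Fintype B2] [Fintype C1] [Fintype C2]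
    (p : Ω → ℝ) (S1 : Ω → A1) (S2 : Ω → A2) (V0 : Ω → B0) (V1 : Ω → B1) (V2 : Ω → B2)
    (Y1 : Ω → C1) (Y2 : Ω → C2) : Prop :=
  H p S1 < I2 p (fun ω => (V0 ω, V1 ω, S1 ω)) Y1
      - CI p (fun ω => (V0 ω, V1 ω)) S2 S1 ∧
  H p S2 < I2 p (fun ω => (V0 ω, V2 ω, S2 ω)) Y2
      - CI p (fun ω => (V0 ω, V2 ω)) S1 S2 ∧
  H p (fun ω => (S1 ω, S2 ω)) < I2 p (fun ω => (V0 ω, V1 ω, S1 ω)) Y1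
      + CI p (fun ω => (V2 ω, S2 ω)) Y2 V0
      - CI p (fun ω => (V1 ω, S1 ω)) (fun ω => (V2 ω, S2 ω)) V0 ∧
  H p (fun ω => (S1 ω, S2 ω)) < CI p (fun ω => (V1 ω, S1 ω)) Y1 V0
      + I2 p (fun ω => (V0 ω, V2 ω, S2 ω)) Y2
      - CI p (fun ω => (V1 ω, S1 ω)) (fun ω => (V2 ω, S2 ω)) V0 ∧
  H p (fun ω => (S1 ω, S2 ω)) < I2 p (fun ω => (V0 ω, V1 ω, S1 ω)) Y1
      + I2 p (fun ω => (V0 ω, V2 ω, S2 ω)) Y2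
      - CI p (fun ω => (V1 ω, S1 ω)) (fun ω => (V2 ω, S2 ω)) V0
      - I2 p (fun ω => (S1 ω, S2 ω)) V0

end CSBC
namespace CSBC

/-- The five inequalities of Han and Costa's theorem for sources `S1, S2`,
auxiliary triple `U0, U1, U2`, common variable `K`, and channel outputs `Y1, Y2`. -/
def HCfive {Ω A1 A2 B0 B1 B2 C1 C2 Kt : Type*} [Fintype Ω] [Fintype A1] [Fintype A2]
    [Fintype B0] [Fintype B1] [Fintype B2] [Fintype C1] [Fintype C2] [Fintype Kt]
    (p : Ω → ℝ) (S1 : Ω → A1) (S2 : Ω → A2) (U0 : Ω → B0) (U1 : Ω → B1) (U2 : Ω → B2)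
    (Y1 : Ω → C1) (Y2 : Ω → C2) (K : Ω → Kt) : Prop :=
  H p S1 < I2 p (fun ω => (U0 ω, U1 ω, S1 ω)) Y1
      - CI p (fun ω => (U0 ω, U1 ω)) S2 S1 ∧
  H p S2 < I2 p (fun ω => (U0 ω, U2 ω, S2 ω)) Y2
      - CI p (fun ω => (U0 ω, U2 ω)) S1 S2 ∧
  H p (fun ω => (S1 ω, S2 ω)) < I2 p (fun ω => (K ω, U0 ω, U1 ω, S1 ω)) Y1
      + CI p (fun ω => (U2 ω, S2 ω)) Y2 (fun ω => (K ω, U0 ω))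
      - CI p (fun ω => (U1 ω, S1 ω)) (fun ω => (U2 ω, S2 ω)) (fun ω => (K ω, U0 ω)) ∧
  H p (fun ω => (S1 ω, S2 ω)) < CI p (fun ω => (U1 ω, S1 ω)) Y1 (fun ω => (K ω, U0 ω))
      + I2 p (fun ω => (K ω, U0 ω, U2 ω, S2 ω)) Y2
      - CI p (fun ω => (U1 ω, S1 ω)) (fun ω => (U2 ω, S2 ω)) (fun ω => (K ω, U0 ω)) ∧
  H p (fun ω => (S1 ω, S2 ω)) < I2 p (fun ω => (U0 ω, U1 ω, S1 ω)) Y1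
      + I2 p (fun ω => (U0 ω, U2 ω, S2 ω)) Y2
      - CI p (fun ω => (U1 ω, S1 ω)) (fun ω => (U2 ω, S2 ω)) (fun ω => (K ω, U0 ω))
      - I2 p (fun ω => (S1 ω, S2 ω)) (fun ω => (K ω, U0 ω))

end CSBC
namespace CSBC

/-- Joint law `p(s1,s2) · p(u0,u1,u2,x|s1,s2) · p(y1,y2|x)` on the product space. -/
def jointLaw {σ1 σ2 𝒰0 𝒰1 𝒰2 𝒳 𝒴1 𝒴2 : Type*}
    (q : σ1 × σ2 → ℝ) (r : σ1 × σ2 → 𝒰0 × 𝒰1 × 𝒰2 × 𝒳 → ℝ) (W : 𝒳 → 𝒴1 × 𝒴2 → ℝ) :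
    σ1 × σ2 × 𝒰0 × 𝒰1 × 𝒰2 × 𝒳 × 𝒴1 × 𝒴2 → ℝ :=
  fun ω => q (ω.1, ω.2.1) * r (ω.1, ω.2.1) (ω.2.2.1, ω.2.2.2.1, ω.2.2.2.2.1, ω.2.2.2.2.2.1)
    * W ω.2.2.2.2.2.1 (ω.2.2.2.2.2.2.1, ω.2.2.2.2.2.2.2)

/-- Average probability of error of a length-`n` code `(enc, dec1, dec2)` for transmitting
the i.i.d. source with per-letter pmf `q` over the DM-BC with per-letter law `W`. -/
def errProb {σ1 σ2 𝒳 𝒴1 𝒴2 : Type*} [Fintype σ1] [Fintype σ2] [Fintype 𝒳]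
    [Fintype 𝒴1] [Fintype 𝒴2]
    (q : σ1 × σ2 → ℝ) (W : 𝒳 → 𝒴1 × 𝒴2 → ℝ) (n : ℕ)
    (enc : (Fin n → σ1 × σ2) → Fin n → 𝒳)
    (dec1 : (Fin n → 𝒴1) → Fin n → σ1)
    (dec2 : (Fin n → 𝒴2) → Fin n → σ2) : ℝ :=
  ∑ s : Fin n → σ1 × σ2, ∑ y : Fin n → 𝒴1 × 𝒴2,
    (∏ i, q (s i)) * (∏ i, W (enc s i) (y i)) *
      (if dec1 (fun i => (y i).1) = (fun i => (s i).1) ∧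
          dec2 (fun i => (y i).2) = (fun i => (s i).2) then 0 else 1)

/-- The sources with joint pmf `q` can be reliably transmitted over the DM-BC `W`:
there is a sequence of codes whose average probability of error tends to `0`. -/
def Reliable {σ1 σ2 𝒳 𝒴1 𝒴2 : Type*} [Fintype σ1] [Fintype σ2] [Fintype 𝒳]
    [Fintype 𝒴1] [Fintype 𝒴2]
    (q : σ1 × σ2 → ℝ) (W : 𝒳 → 𝒴1 × 𝒴2 → ℝ) : Prop :=
  ∃ (enc : (n : ℕ) → (Fin n → σ1 × σ2) → Fin n → 𝒳)
    (dec1 : (n : ℕ) → (Fin n → 𝒴1) → Fin n → σ1)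
    (dec2 : (n : ℕ) → (Fin n → 𝒴2) → Fin n → σ2),
    Tendsto (fun n => errProb q W n (enc n) (dec1 n) (dec2 n)) atTop (nhds 0)

end CSBC
namespace CSBC

lemma dist_apply_le_of_determines {Ω A B : Type*} [Fintype Ω] [Fintype A] [Fintype B]
    {p : Ω → ℝ} (hp : ∀ ω, 0 ≤ p ω) {X : Ω → A} {Z : Ω → B}
    (h : ∀ ω ω', p ω ≠ 0 → p ω' ≠ 0 → Z ω = Z ω' → X ω = X ω') {ω : Ω} (hω : p ω ≠ 0) :
    dist p Z (Z ω) ≤ dist p X (X ω) := by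
  unfold dist
  refine Finset.sum_le_sum fun ω' _ => ?_
  by_cases h0 : p ω' = 0
  · simp [h0]
  · by_cases hz : Z ω' = Z ω
    · rw [if_pos hz, if_pos (h ω' ω h0 hω hz)]
    · rw [if_neg hz]
      split_ifs
      exacts [hp ω', le_rfl]

/-- Entropy as an expectation over the underlying sample space. -/
lemma H_eq_sum {Ω A : Type*} [Fintype Ω] [Fintype A] (p : Ω → ℝ) (X : Ω → A) :
    H p X = -∑ ω, p ω * Real.log (dist p X (X ω)) := by
  unfold H
  congr 1
  have h1 : ∀ a, dist p X a * Real.log (dist p X a)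
      = ∑ ω, if X ω = a then p ω * Real.log (dist p X a) else 0 := by
    intro a
    conv_lhs => rw [show dist p X a = ∑ ω, if X ω = a then p ω else 0 from rfl, Finset.sum_mul]
    refine Finset.sum_congr rfl fun ω _ => ?_
    split_ifs
    · rfl
    · exact zero_mul _
  simp_rw [h1]
  rw [Finset.sum_comm]
  refine Finset.sum_congr rfl fun ω _ => ?_
  simp

/-- If `Z` determines `X` on the support of `p`, then `H(X) ≤ H(Z)`. Only nonnegativity of `p`
matters, not its total mass. -/
lemma H_le_of_determines {Ω A B : Type*} [Fintype Ω] [Fintype A] [Fintype B]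
    {p : Ω → ℝ} (hp : ∀ ω, 0 ≤ p ω) {X : Ω → A} {Z : Ω → B}
    (h : ∀ ω ω', p ω ≠ 0 → p ω' ≠ 0 → Z ω = Z ω' → X ω = X ω') : H p X ≤ H p Z := by
  rw [H_eq_sum, H_eq_sum, neg_le_neg_iff]
  refine Finset.sum_le_sum fun ω _ => ?_
  by_cases h0 : p ω = 0
  · simp [h0]
  · refine mul_le_mul_of_nonneg_left (Real.log_le_log ?_ (dist_apply_le_of_determines hp h h0))
      (hp ω)
    have hpos : 0 < p ω := lt_of_le_of_ne (hp ω) (Ne.symm h0)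
    refine hpos.trans_le ?_
    unfold dist
    have := Finset.single_le_sum (f := fun ω' => if Z ω' = Z ω then p ω' else 0)
      (fun ω' _ => by split_ifs; exacts [hp ω', le_rfl]) (Finset.mem_univ ω)
    simpa using this

lemma H_congr {Ω A B : Type*} [Fintype Ω] [Fintype A] [Fintype B]
    {p : Ω → ℝ} (hp : ∀ ω, 0 ≤ p ω) {X : Ω → A} {Z : Ω → B}
    (h : ∀ ω ω', p ω ≠ 0 → p ω' ≠ 0 → (X ω = X ω' ↔ Z ω = Z ω')) : H p X = H p Z :=
  le_antisymm (H_le_of_determines hp fun ω ω' h1 h2 => (h ω ω' h1 h2).2)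
    (H_le_of_determines hp fun ω ω' h1 h2 => (h ω ω' h1 h2).1)

lemma H_pushforward {Ω Ω' A : Type*} [Fintype Ω] [Fintype Ω'] [Fintype A]
    (p : Ω → ℝ) (ι : Ω → Ω') (X : Ω' → A) :
    H (dist p ι) X = H p (fun ω => X (ι ω)) := by
  have h : dist (dist p ι) X = dist p (fun ω => X (ι ω)) := by
    funext a
    have h1 : ∀ ω', (if X ω' = a then dist p ι ω' else 0)
        = ∑ ω, if ι ω = ω' then (if X ω' = a then p ω else 0) else 0 := by
      intro ω'
      unfold dist
      split_ifs <;> simp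
    change ∑ ω', (if X ω' = a then dist p ι ω' else 0) = ∑ ω, if X (ι ω) = a then p ω else 0
    simp_rw [h1]
    rw [Finset.sum_comm]
    refine Finset.sum_congr rfl fun ω _ => ?_
    simp
  unfold H
  rw [h]

/-- The entropy rewriting rule behind both implications: two variables have equal entropy if they
determine each other once `K` is known to be a function of `S1` and of `S2`. -/
lemma H_congr_of_common {Ω A1 A2 Kt : Type*} [Fintype Ω] {p : Ω → ℝ}
    {S1 : Ω → A1} {S2 : Ω → A2} {K : Ω → Kt} (hp : ∀ ω, 0 ≤ p ω)
    (h1 : ∀ ω ω', p ω ≠ 0 → p ω' ≠ 0 → S1 ω = S1 ω' → K ω = K ω')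
    (h2 : ∀ ω ω', p ω ≠ 0 → p ω' ≠ 0 → S2 ω = S2 ω' → K ω = K ω')
    {A B : Type*} [Fintype A] [Fintype B] (X : Ω → A) (Z : Ω → B)
    (h : ∀ ω ω', (S1 ω = S1 ω' → K ω = K ω') → (S2 ω = S2 ω' → K ω = K ω') →
      (X ω = X ω' ↔ Z ω = Z ω')) : H p X = H p Z :=
  H_congr hp fun ω ω' hω hω' => h ω ω' (h1 ω ω' hω hω') (h2 ω ω' hω hω')

section Five

variable {Ω A1 A2 B0 B1 B2 C1 C2 Kt : Type} [Fintype Ω] [Fintype A1] [Fintype A2]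
    [Fintype B0] [Fintype B1] [Fintype B2] [Fintype C1] [Fintype C2] [Fintype Kt]
    {p : Ω → ℝ} {S1 : Ω → A1} {S2 : Ω → A2} {U0 : Ω → B0} {U1 : Ω → B1} {U2 : Ω → B2}
    {Y1 : Ω → C1} {Y2 : Ω → C2} {K : Ω → Kt}

set_option maxHeartbeats 1000000 in
/-- Han–Costa for `(U0, U1, U2)` gives Minero–Kim for `((K, U0), U1, U2)`. -/
lemma MKfive_of_HCfive (hp : ∀ ω, 0 ≤ p ω)
    (h1 : ∀ ω ω', p ω ≠ 0 → p ω' ≠ 0 → S1 ω = S1 ω' → K ω = K ω')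
    (h2 : ∀ ω ω', p ω ≠ 0 → p ω' ≠ 0 → S2 ω = S2 ω' → K ω = K ω')
    (h : HCfive p S1 S2 U0 U1 U2 Y1 Y2 K) :
    MKfive p S1 S2 (fun ω => (K ω, U0 ω)) U1 U2 Y1 Y2 := by
  have key {A B : Type} [Fintype A] [Fintype B] := H_congr_of_common (A := A) (B := B) hp h1 h2
  unfold HCfive at h
  unfold MKfive
  simp only [I2, CI] at h ⊢
  have a1 := key (fun ω => ((K ω, U0 ω), U1 ω, S1 ω)) (fun ω => (U0 ω, U1 ω, S1 ω))
    (by intro _ _; simp only [Prod.mk.injEq]; tauto)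
  have a2 := key (fun ω => (((K ω, U0 ω), U1 ω, S1 ω), Y1 ω))
    (fun ω => ((U0 ω, U1 ω, S1 ω), Y1 ω)) (by intro _ _; simp only [Prod.mk.injEq]; tauto)
  have a3 := key (fun ω => (((K ω, U0 ω), U1 ω), S1 ω)) (fun ω => ((U0 ω, U1 ω), S1 ω))
    (by intro _ _; simp only [Prod.mk.injEq]; tauto)
  have a4 := key (fun ω => (((K ω, U0 ω), U1 ω), S2 ω, S1 ω))
    (fun ω => ((U0 ω, U1 ω), S2 ω, S1 ω)) (by intro _ _; simp only [Prod.mk.injEq]; tauto)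
  have a5 := key (fun ω => (K ω, U0 ω, U1 ω, S1 ω)) (fun ω => (U0 ω, U1 ω, S1 ω))
    (by intro _ _; simp only [Prod.mk.injEq]; tauto)
  have a6 := key (fun ω => ((K ω, U0 ω, U1 ω, S1 ω), Y1 ω))
    (fun ω => ((U0 ω, U1 ω, S1 ω), Y1 ω)) (by intro _ _; simp only [Prod.mk.injEq]; tauto)
  have b1 := key (fun ω => ((K ω, U0 ω), U2 ω, S2 ω)) (fun ω => (U0 ω, U2 ω, S2 ω))
    (by intro _ _; simp only [Prod.mk.injEq]; tauto)
  have b2 := key (fun ω => (((K ω, U0 ω), U2 ω, S2 ω), Y2 ω))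
    (fun ω => ((U0 ω, U2 ω, S2 ω), Y2 ω)) (by intro _ _; simp only [Prod.mk.injEq]; tauto)
  have b3 := key (fun ω => (((K ω, U0 ω), U2 ω), S2 ω)) (fun ω => ((U0 ω, U2 ω), S2 ω))
    (by intro _ _; simp only [Prod.mk.injEq]; tauto)
  have b4 := key (fun ω => (((K ω, U0 ω), U2 ω), S1 ω, S2 ω))
    (fun ω => ((U0 ω, U2 ω), S1 ω, S2 ω)) (by intro _ _; simp only [Prod.mk.injEq]; tauto)
  have b5 := key (fun ω => (K ω, U0 ω, U2 ω, S2 ω)) (fun ω => (U0 ω, U2 ω, S2 ω))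
    (by intro _ _; simp only [Prod.mk.injEq]; tauto)
  have b6 := key (fun ω => ((K ω, U0 ω, U2 ω, S2 ω), Y2 ω))
    (fun ω => ((U0 ω, U2 ω, S2 ω), Y2 ω)) (by intro _ _; simp only [Prod.mk.injEq]; tauto)
  obtain ⟨i1, i2, i3, i4, i5⟩ := h
  refine ⟨?_, ?_, ?_, ?_, ?_⟩ <;> linarith

set_option maxHeartbeats 1000000 in
/-- Minero–Kim implies Han–Costa with the same auxiliary variables. -/
lemma HCfive_of_MKfive (hp : ∀ ω, 0 ≤ p ω)
    (h1 : ∀ ω ω', p ω ≠ 0 → p ω' ≠ 0 → S1 ω = S1 ω' → K ω = K ω')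
    (h2 : ∀ ω ω', p ω ≠ 0 → p ω' ≠ 0 → S2 ω = S2 ω' → K ω = K ω')
    (h : MKfive p S1 S2 U0 U1 U2 Y1 Y2) :
    HCfive p S1 S2 U0 U1 U2 Y1 Y2 K := by
  have key {A B : Type} [Fintype A] [Fintype B] := H_congr_of_common (A := A) (B := B) hp h1 h2
  unfold MKfive at h
  unfold HCfive
  simp only [I2, CI] at h ⊢
  have a1 := key (fun ω => (K ω, U0 ω, U1 ω, S1 ω)) (fun ω => (U0 ω, U1 ω, S1 ω))
    (by intro _ _; simp only [Prod.mk.injEq]; tauto)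
  have a2 := key (fun ω => ((K ω, U0 ω, U1 ω, S1 ω), Y1 ω))
    (fun ω => ((U0 ω, U1 ω, S1 ω), Y1 ω)) (by intro _ _; simp only [Prod.mk.injEq]; tauto)
  have a3 := key (fun ω => ((U1 ω, S1 ω), K ω, U0 ω)) (fun ω => ((U1 ω, S1 ω), U0 ω))
    (by intro _ _; simp only [Prod.mk.injEq]; tauto)
  have a4 := key (fun ω => ((U1 ω, S1 ω), Y1 ω, K ω, U0 ω))
    (fun ω => ((U1 ω, S1 ω), Y1 ω, U0 ω)) (by intro _ _; simp only [Prod.mk.injEq]; tauto)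
  have b1 := key (fun ω => (K ω, U0 ω, U2 ω, S2 ω)) (fun ω => (U0 ω, U2 ω, S2 ω))
    (by intro _ _; simp only [Prod.mk.injEq]; tauto)
  have b2 := key (fun ω => ((K ω, U0 ω, U2 ω, S2 ω), Y2 ω))
    (fun ω => ((U0 ω, U2 ω, S2 ω), Y2 ω)) (by intro _ _; simp only [Prod.mk.injEq]; tauto)
  have b3 := key (fun ω => ((U2 ω, S2 ω), K ω, U0 ω)) (fun ω => ((U2 ω, S2 ω), U0 ω))
    (by intro _ _; simp only [Prod.mk.injEq]; tauto)
  have b4 := key (fun ω => ((U2 ω, S2 ω), Y2 ω, K ω, U0 ω))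
    (fun ω => ((U2 ω, S2 ω), Y2 ω, U0 ω)) (by intro _ _; simp only [Prod.mk.injEq]; tauto)
  have c1 := key (fun ω => ((U1 ω, S1 ω), (U2 ω, S2 ω), K ω, U0 ω))
    (fun ω => ((U1 ω, S1 ω), (U2 ω, S2 ω), U0 ω)) (by intro _ _; simp only [Prod.mk.injEq]; tauto)
  have c2 := key (fun ω => ((S1 ω, S2 ω), K ω, U0 ω)) (fun ω => ((S1 ω, S2 ω), U0 ω))
    (by intro _ _; simp only [Prod.mk.injEq]; tauto)
  -- Nonnegativity of `H(K | Yᵢ, U0)`: the only inequalities used.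
  have d1 : H p (fun ω => (Y1 ω, U0 ω)) ≤ H p (fun ω => (Y1 ω, K ω, U0 ω)) :=
    H_le_of_determines hp (by intro _ _; simp only [Prod.mk.injEq]; tauto)
  have d2 : H p (fun ω => (Y2 ω, U0 ω)) ≤ H p (fun ω => (Y2 ω, K ω, U0 ω)) :=
    H_le_of_determines hp (by intro _ _; simp only [Prod.mk.injEq]; tauto)
  obtain ⟨i1, i2, i3, i4, i5⟩ := h
  refine ⟨?_, ?_, ?_, ?_, ?_⟩ <;> linarith

end Five

lemma jointLaw_nonneg {σ1 σ2 𝒰0 𝒰1 𝒰2 𝒳 𝒴1 𝒴2 : Type*} [Fintype σ1] [Fintype σ2]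
    [Fintype 𝒰0] [Fintype 𝒰1] [Fintype 𝒰2] [Fintype 𝒳] [Fintype 𝒴1] [Fintype 𝒴2]
    {q : σ1 × σ2 → ℝ} {r : σ1 × σ2 → 𝒰0 × 𝒰1 × 𝒰2 × 𝒳 → ℝ} {W : 𝒳 → 𝒴1 × 𝒴2 → ℝ}
    (hq : IsPMF q) (hr : ∀ s, IsPMF (r s)) (hW : ∀ x, IsPMF (W x)) (ω) :
    0 ≤ jointLaw q r W ω :=
  mul_nonneg (mul_nonneg (hq.1 _) ((hr _).1 _)) ((hW _).1 _)

/-- The conditional law of `((K, U0), U1, U2, X)` given the sources, where `K = f(S1)`. -/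
def adjoinK {σ1 σ2 𝒰0 𝒰1 𝒰2 𝒳 Kt : Type*} (f : σ1 → Kt)
    (r : σ1 × σ2 → 𝒰0 × 𝒰1 × 𝒰2 × 𝒳 → ℝ) :
    σ1 × σ2 → (Kt × 𝒰0) × 𝒰1 × 𝒰2 × 𝒳 → ℝ :=
  fun s u => if f s.1 = u.1.1 then r s (u.1.2, u.2) else 0

lemma adjoinK_isPMF {σ1 σ2 𝒰0 𝒰1 𝒰2 𝒳 Kt : Type*} [Fintype 𝒰0] [Fintype 𝒰1] [Fintype 𝒰2]
    [Fintype 𝒳] [Fintype Kt] (f : σ1 → Kt) {r : σ1 × σ2 → 𝒰0 × 𝒰1 × 𝒰2 × 𝒳 → ℝ}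
    (hr : ∀ s, IsPMF (r s)) (s : σ1 × σ2) : IsPMF (adjoinK f r s) := by
  refine ⟨fun u => ?_, ?_⟩
  · unfold adjoinK
    split_ifs
    exacts [(hr s).1 _, le_rfl]
  · rw [← (hr s).2, Fintype.sum_prod_type, Fintype.sum_prod_type, Finset.sum_comm,
      Fintype.sum_prod_type]
    refine Finset.sum_congr rfl fun u0 _ => ?_
    rw [Finset.sum_comm]
    refine Finset.sum_congr rfl fun u _ => ?_
    simp [adjoinK]

lemma jointLaw_adjoinK {σ1 σ2 𝒰0 𝒰1 𝒰2 𝒳 𝒴1 𝒴2 Kt : Type*} [Fintype σ1] [Fintype σ2]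
    [Fintype 𝒰0] [Fintype 𝒰1] [Fintype 𝒰2] [Fintype 𝒳] [Fintype 𝒴1] [Fintype 𝒴2] [Fintype Kt]
    (q : σ1 × σ2 → ℝ) (r : σ1 × σ2 → 𝒰0 × 𝒰1 × 𝒰2 × 𝒳 → ℝ) (W : 𝒳 → 𝒴1 × 𝒴2 → ℝ)
    (f : σ1 → Kt) :
    jointLaw q (adjoinK f r) W
      = dist (jointLaw q r W) (fun ω => (ω.1, ω.2.1, (f ω.1, ω.2.2.1), ω.2.2.2)) := by
  funext ⟨s1, s2, ⟨k, u0⟩, t⟩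
  unfold dist
  rw [Finset.sum_eq_single (s1, s2, u0, t)]
  · by_cases hk : f s1 = k <;> simp [jointLaw, adjoinK, hk]
  · rintro ⟨s1', s2', u0', t'⟩ - hne
    refine if_neg fun he => hne ?_
    grind
  · simp

end CSBC

/-- Proposition 1: equivalence of the Han–Costa condition and the
Minero–Kim condition.  For a fixed source pmf `q`, channel `W`, and common function
`K = f(S1) = g(S2)` (a.s.), the existence of auxiliary variables satisfying the five
Han–Costa inequalities is equivalent to the existence of auxiliary variables
satisfying the five Minero–Kim inequalities. -/
theorem han_costa_equiv_minero_kim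
    {σ1 σ2 𝒳 𝒴1 𝒴2 Kt : Type} [Fintype σ1] [Fintype σ2] [Fintype 𝒳]
    [Fintype 𝒴1] [Fintype 𝒴2] [Fintype Kt]
    (q : σ1 × σ2 → ℝ) (hq : IsPMF q)
    (W : 𝒳 → 𝒴1 × 𝒴2 → ℝ) (hW : ∀ x, IsPMF (W x))
    (f : σ1 → Kt) (g : σ2 → Kt)
    (hfg : ∀ s : σ1 × σ2, q s ≠ 0 → f s.1 = g s.2) :
    (∃ (𝒰0 𝒰1 𝒰2 : Type) (_ : Fintype 𝒰0) (_ : Fintype 𝒰1) (_ : Fintype 𝒰2)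
      (r : σ1 × σ2 → 𝒰0 × 𝒰1 × 𝒰2 × 𝒳 → ℝ),
      (∀ s, IsPMF (r s)) ∧
      HCfive (jointLaw q r W)
        (fun ω => ω.1) (fun ω => ω.2.1) (fun ω => ω.2.2.1) (fun ω => ω.2.2.2.1)
        (fun ω => ω.2.2.2.2.1) (fun ω => ω.2.2.2.2.2.2.1) (fun ω => ω.2.2.2.2.2.2.2)
        (fun ω => f ω.1)) ↔
    (∃ (𝒰0 𝒰1 𝒰2 : Type) (_ : Fintype 𝒰0) (_ : Fintype 𝒰1) (_ : Fintype 𝒰2)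
      (r : σ1 × σ2 → 𝒰0 × 𝒰1 × 𝒰2 × 𝒳 → ℝ),
      (∀ s, IsPMF (r s)) ∧
      MKfive (jointLaw q r W)
        (fun ω => ω.1) (fun ω => ω.2.1) (fun ω => ω.2.2.1) (fun ω => ω.2.2.2.1)
        (fun ω => ω.2.2.2.2.1) (fun ω => ω.2.2.2.2.2.2.1) (fun ω => ω.2.2.2.2.2.2.2)) := by
  have hK1 {𝒰0 𝒰1 𝒰2 : Type} (r : σ1 × σ2 → 𝒰0 × 𝒰1 × 𝒰2 × 𝒳 → ℝ) :
      ∀ ω ω', jointLaw q r W ω ≠ 0 → jointLaw q r W ω' ≠ 0 → ω.1 = ω'.1 → f ω.1 = f ω'.1 :=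
    fun ω ω' _ _ h => congrArg f h
  have hK2 {𝒰0 𝒰1 𝒰2 : Type} (r : σ1 × σ2 → 𝒰0 × 𝒰1 × 𝒰2 × 𝒳 → ℝ) :
      ∀ ω ω', jointLaw q r W ω ≠ 0 → jointLaw q r W ω' ≠ 0 → ω.2.1 = ω'.2.1 → f ω.1 = f ω'.1 := by
    intro ω ω' hω hω' h
    have e := hfg _ (left_ne_zero_of_mul (left_ne_zero_of_mul hω))
    have e' := hfg _ (left_ne_zero_of_mul (left_ne_zero_of_mul hω'))
    dsimp only at e e'
    rw [e, e', h]
  constructor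
  · rintro ⟨𝒰0, 𝒰1, 𝒰2, _, _, _, r, hr, h⟩
    refine ⟨Kt × 𝒰0, 𝒰1, 𝒰2, inferInstance, inferInstance, inferInstance, adjoinK f r,
      adjoinK_isPMF f hr, ?_⟩
    have h' := MKfive_of_HCfive (jointLaw_nonneg hq hr hW) (hK1 r) (hK2 r) h
    rw [jointLaw_adjoinK]
    simp only [MKfive, I2, CI, H_pushforward] at h' ⊢
    exact h'
  · rintro ⟨𝒰0, 𝒰1, 𝒰2, _, _, _, r, hr, h⟩
    exact ⟨𝒰0, 𝒰1, 𝒰2, inferInstance, inferInstance, inferInstance, r, hr,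
      HCfive_of_MKfive (jointLaw_nonneg hq hr hW) (hK1 r) (hK2 r) h⟩
end
end

section
/- Let S1, S2, U0, U1, U2, Y1, Y2, K be finitely-valued random variables on a common probability space such that K = f(S1) = g(S2) almost surely for deterministic maps f, g. Then I(U1,S1;Y1|U0) + I(U0,U2,S2;Y2) − I(U1,S1;U2,S2|U0) ≤ I(U1,S1;Y1|K,U0) + I(K,U0,U2,S2;Y2) − I(U1,S1;U2,S2|K,U0). -/
/-!
Expanding both sides in entropies, and using that adjoining
`K` to a tuple containing `S1` or `S2` does not change its entropy, every term cancels except that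
the right side minus the left side equals `H(Y1, K, U0) - H(Y1, U0)`, which is nonnegative. Both
facts follow from `H_le_of_factor`: a variable that is almost surely a function of another one has
at most its entropy.
-/

open Real Filter

attribute [local instance] Classical.propDecidable

noncomputable section

open CSBC
namespace CSBC

/-- Almost surely, the fibre of `X` through `ω` is contained in the fibre of `Y = φ(X)` through `ω`,
so the surprisal of `Y` is pointwise at most that of `X`. -/
lemma H_le_of_factor {Ω A B : Type*} [Fintype Ω] [Fintype A] [Fintype B]
    {p : Ω → ℝ} (hp : ∀ ω, 0 ≤ p ω) (X : Ω → A) (Y : Ω → B) (φ : A → B)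
    (h : ∀ ω, p ω ≠ 0 → Y ω = φ (X ω)) : H p Y ≤ H p X := by
  rw [H_eq_sum, H_eq_sum]
  refine neg_le_neg (Finset.sum_le_sum fun ω _ => ?_)
  by_cases h0 : p ω = 0
  · simp [h0]
  refine mul_le_mul_of_nonneg_left (Real.log_le_log ?_ ?_) (hp ω)
  · have hle : (if X ω = X ω then p ω else 0) ≤ dist p X (X ω) :=
      Finset.single_le_sum (f := fun ω' => if X ω' = X ω then p ω' else 0)
        (fun i _ => by split_ifs <;> simp [hp]) (Finset.mem_univ ω)
    rw [if_pos rfl] at hle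
    exact lt_of_lt_of_le (lt_of_le_of_ne (hp ω) (Ne.symm h0)) hle
  · refine Finset.sum_le_sum fun i _ => ?_
    by_cases hi : p i = 0
    · simp [hi]
    by_cases hX : X i = X ω
    · have hY : Y i = Y ω := by rw [h i hi, h ω h0, hX]
      simp [hX, hY]
    · rw [if_neg hX]
      split_ifs <;> simp [hp]

lemma H_eq_of_factor {Ω A B : Type*} [Fintype Ω] [Fintype A] [Fintype B]
    {p : Ω → ℝ} (hp : ∀ ω, 0 ≤ p ω) (X : Ω → A) (Y : Ω → B) (φ : A → B) (ψ : B → A)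
    (h : ∀ ω, p ω ≠ 0 → Y ω = φ (X ω)) (h' : ∀ ω, p ω ≠ 0 → X ω = ψ (Y ω)) :
    H p Y = H p X :=
  le_antisymm (H_le_of_factor hp X Y φ h) (H_le_of_factor hp Y X ψ h')

end CSBC

/-- With `K = f(S1) = g(S2)` almost surely, the stated
mutual-information inequality holds. -/
theorem conditioning_on_common_part_4
    {Ω A1 A2 B0 B1 B2 C1 C2 Kt : Type*}
    [Fintype Ω] [Fintype A1] [Fintype A2] [Fintype B0] [Fintype B1] [Fintype B2]
    [Fintype C1] [Fintype C2] [Fintype Kt]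
    (p : Ω → ℝ) (hp : IsPMF p)
    (S1 : Ω → A1) (S2 : Ω → A2) (U0 : Ω → B0) (U1 : Ω → B1) (U2 : Ω → B2)
    (Y1 : Ω → C1) (Y2 : Ω → C2) (K : Ω → Kt)
    (f : A1 → Kt) (g : A2 → Kt)
    (hf : ∀ ω, p ω ≠ 0 → K ω = f (S1 ω))
    (hg : ∀ ω, p ω ≠ 0 → K ω = g (S2 ω)) :
    CI p (fun ω => (U1 ω, S1 ω)) Y1 U0
      + I2 p (fun ω => (U0 ω, U2 ω, S2 ω)) Y2
      - CI p (fun ω => (U1 ω, S1 ω)) (fun ω => (U2 ω, S2 ω)) U0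
    ≤ CI p (fun ω => (U1 ω, S1 ω)) Y1 (fun ω => (K ω, U0 ω))
      + I2 p (fun ω => (K ω, U0 ω, U2 ω, S2 ω)) Y2
      - CI p (fun ω => (U1 ω, S1 ω)) (fun ω => (U2 ω, S2 ω)) (fun ω => (K ω, U0 ω)) := by
  have hp0 := hp.1
  -- `K` is redundant next to `S1`.
  have e1 : H p (fun ω => ((U1 ω, S1 ω), Y1 ω, K ω, U0 ω))
      = H p (fun ω => ((U1 ω, S1 ω), Y1 ω, U0 ω)) :=
    H_eq_of_factor hp0 _ _ (fun x => (x.1, x.2.1, f x.1.2, x.2.2))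
      (fun x => (x.1, x.2.1, x.2.2.2)) (fun ω h => by simp [hf ω h]) (fun ω _ => rfl)
  have e2 : H p (fun ω => ((U1 ω, S1 ω), (U2 ω, S2 ω), K ω, U0 ω))
      = H p (fun ω => ((U1 ω, S1 ω), (U2 ω, S2 ω), U0 ω)) :=
    H_eq_of_factor hp0 _ _ (fun x => (x.1, x.2.1, f x.1.2, x.2.2))
      (fun x => (x.1, x.2.1, x.2.2.2)) (fun ω h => by simp [hf ω h]) (fun ω _ => rfl)
  -- `K` is redundant next to `S2`.
  have e3 : H p (fun ω => ((K ω, U0 ω, U2 ω, S2 ω), Y2 ω))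
      = H p (fun ω => ((U0 ω, U2 ω, S2 ω), Y2 ω)) :=
    H_eq_of_factor hp0 _ _ (fun x => ((g x.1.2.2, x.1), x.2))
      (fun x => (x.1.2, x.2)) (fun ω h => by simp [hg ω h]) (fun ω _ => rfl)
  -- The remaining identities only reorder coordinates.
  have e4 : H p (fun ω => (K ω, U0 ω, U2 ω, S2 ω))
      = H p (fun ω => ((U2 ω, S2 ω), K ω, U0 ω)) :=
    H_eq_of_factor hp0 _ _ (fun x => (x.2.1, x.2.2, x.1))
      (fun x => (x.2.2, x.1, x.2.1)) (fun ω _ => rfl) (fun ω _ => rfl)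
  have e5 : H p (fun ω => (U0 ω, U2 ω, S2 ω)) = H p (fun ω => ((U2 ω, S2 ω), U0 ω)) :=
    H_eq_of_factor hp0 _ _ Prod.swap Prod.swap (fun ω _ => rfl) (fun ω _ => rfl)
  have hle : H p (fun ω => (Y1 ω, U0 ω)) ≤ H p (fun ω => (Y1 ω, K ω, U0 ω)) :=
    H_le_of_factor hp0 _ _ (fun x => (x.1, x.2.2)) (fun ω _ => rfl)
  unfold CI I2
  linarith
end
end

section
/- Let h1, h2 and v1, …, v11 be real numbers satisfying: v1 ≥ 0, v2 ≥ 0, v3 ≥ 0, v1 + v2 ≤ v4, v1 + v3 ≤ v5, v2 + v3 ≤ v6, v4 + v6 ≤ v2 + v7, v4 + v5 ≤ v1 + v7, v5 + v6 ≤ v3 + v7, v8 ≤ v9, v10 ≤ v11. Then there exist real numbers R0, R1, R2 satisfying the eleven conditions R0 > v1, R1 > v2, R2 > v3, R0 + R1 > v4, R0 + R2 > v5, R1 + R2 > v6, R0 + R1 + R2 > v7, h1 + R1 < v8, h1 + R0 + R1 < v9, h2 + R2 < v10, h2 + R0 + R2 < v11, if and only if the following eight inequalities hold: h1 < v9 −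 v4; h1 < v8 − v2; h2 < v11 − v5; h2 < v10 − v3; h1 + h2 < v9 + v10 − v7; h1 + h2 < v8 + v11 − v7; h1 + h2 < v8 + v10 − v6; h1 + h2 < v9 + v11 − v7 − v1. -/
/-!
The forward direction adds up rate conditions. For the converse the rates are chosen in the order
`R0`, `R2`, `R1`: each must lie strictly between finitely many lower bounds and finitely many upper
bounds, and `exists_between` provides it once every lower bound is below every upper bound. The
bounds on `R2` and `R0` include those that eliminating `R1`, and then `R2`, creates. For `R0` the
24 comparisons follow from the eight inequalities and the side constraints, notably from the
supermodularity-type constraints, which make `v1 + v6`, `v2 + v5` and `v3 + v4` at most `v7`.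
-/

/-- Fourier–Motzkin elimination step.  Under the eleven linear
side constraints on `v1, …, v11`, rates `R0, R1, R2` satisfying the eleven rate
conditions exist if and only if the eight inequalities on `h1, h2` hold. -/
theorem fourier_motzkin_elimination
    (h1 h2 v1 v2 v3 v4 v5 v6 v7 v8 v9 v10 v11 : ℝ)
    (c1 : 0 ≤ v1) (c2 : 0 ≤ v2) (c3 : 0 ≤ v3)
    (c4 : v1 + v2 ≤ v4) (c5 : v1 + v3 ≤ v5) (c6 : v2 + v3 ≤ v6)
    (c7 : v4 + v6 ≤ v2 + v7) (c8 : v4 + v5 ≤ v1 + v7) (c9 : v5 + v6 ≤ v3 + v7)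
    (c10 : v8 ≤ v9) (c11 : v10 ≤ v11) :
    (∃ R0 R1 R2 : ℝ,
      R0 > v1 ∧ R1 > v2 ∧ R2 > v3 ∧
      R0 + R1 > v4 ∧ R0 + R2 > v5 ∧ R1 + R2 > v6 ∧
      R0 + R1 + R2 > v7 ∧
      h1 + R1 < v8 ∧ h1 + R0 + R1 < v9 ∧
      h2 + R2 < v10 ∧ h2 + R0 + R2 < v11) ↔
    (h1 < v9 - v4 ∧ h1 < v8 - v2 ∧ h2 < v11 - v5 ∧ h2 < v10 - v3 ∧
      h1 + h2 < v9 + v10 - v7 ∧ h1 + h2 < v8 + v11 - v7 ∧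
      h1 + h2 < v8 + v10 - v6 ∧ h1 + h2 < v9 + v11 - v7 - v1) := by
  constructor
  · rintro ⟨R0, R1, R2, r1, r2, r3, r4, r5, r6, r7, r8, r9, r10, r11⟩
    refine ⟨?_, ?_, ?_, ?_, ?_, ?_, ?_, ?_⟩ <;> linarith
  · rintro ⟨i1, i2, i3, i4, i5, i6, i7, i8⟩
    -- The last upper bound but one is halved: `R0` enters both `R0 + R1` and `R0 + R2`,
    -- which are bounded above while `R1 + R2 > v6`.
    obtain ⟨R0, hl, hu⟩ : ∃ R0,
        max (max v1 (v4 - (v8 - h1))) (max (v5 - (v10 - h2)) (v7 - (v8 - h1) - (v10 - h2))) < R0 ∧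
        R0 < min (min (min (v9 - h1 - v2) (v11 - h2 - v3))
            (min (v9 - h1 + (v10 - h2) - v6) (v8 - h1 + (v11 - h2) - v6)))
          (min ((v9 - h1 + (v11 - h2) - v6) / 2) (v9 - h1 + (v11 - h2) - v7)) := by
      apply exists_between
      simp only [max_lt_iff, lt_min_iff]
      and_intros <;> linarith
    simp only [max_lt_iff, lt_min_iff] at hl hu
    obtain ⟨⟨l1, l2⟩, ⟨l3, l4⟩⟩ := hl
    obtain ⟨⟨⟨u1, u2⟩, ⟨u3, u4⟩⟩, ⟨u5, u6⟩⟩ := hu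
    obtain ⟨R2, hl, hu⟩ : ∃ R2,
        max (max (max v3 (v5 - R0)) (max (v6 - (v8 - h1)) (v6 - (v9 - h1) + R0)))
          (max (v7 - R0 - (v8 - h1)) (v7 - (v9 - h1))) < R2 ∧
        R2 < min (v10 - h2) (v11 - h2 - R0) := by
      apply exists_between
      simp only [max_lt_iff, lt_min_iff]
      and_intros <;> linarith
    simp only [max_lt_iff, lt_min_iff] at hl hu
    obtain ⟨⟨⟨m1, m2⟩, ⟨m3, m4⟩⟩, ⟨m5, m6⟩⟩ := hl
    obtain ⟨n1, n2⟩ := hu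
    obtain ⟨R1, hl, hu⟩ : ∃ R1,
        max (max v2 (v4 - R0)) (max (v6 - R2) (v7 - R0 - R2)) < R1 ∧
        R1 < min (v8 - h1) (v9 - h1 - R0) := by
      apply exists_between
      simp only [max_lt_iff, lt_min_iff]
      and_intros <;> linarith
    simp only [max_lt_iff, lt_min_iff] at hl hu
    obtain ⟨⟨p1, p2⟩, ⟨p3, p4⟩⟩ := hl
    obtain ⟨q1, q2⟩ := hu
    refine ⟨R0, R1, R2, ?_, ?_, ?_, ?_, ?_, ?_, ?_, ?_, ?_, ?_, ?_⟩ <;> linarith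
end
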